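/- arXiv:2407.10697 — 2 statements merged into one kernel-verified Lean document; each statement's English description precedes it below -/
import Mathlib

section
/- Let n ≥ 5, α := (n−3)/2, and let d ≥ 1 be an integer; write s' := t_{1,d}^{α,α} for the largest root of p_d^{α,α} and q_{d,α} := (α²−1)/((d+α)(d+α+1)). Then the function y(t) := (1−t²)^{(α+1)/2}·p_d^{α,α}(t) is concave on the interval [s', sqrt(1−q_{d,α})]. -/
open MeasureTheory Filter Real

noncomputable section

/-- Generalized binomial coefficient `C(a, k)` for real `a`. -/
def genBinom (a : ℝ) (k : ℕ) : ℝ := (∏ i ∈ Finset.range k, (a - i)) / (Nat.factorial k : ℝ)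

/-- The Jacobi polynomial `p_d^{α,β}`, via the standard explicit formula; it is the degree-`d`
polynomial orthogonal to lower degrees for the weight `(1-t)^α (1+t)^β` on `[-1,1]`,
normalized by `p_d^{α,β}(1) = Γ(d+α+1)/(Γ(α+1)Γ(d+1))`. -/
def jacobiP (α β : ℝ) (d : ℕ) (x : ℝ) : ℝ :=
  ∑ s ∈ Finset.range (d + 1),
    genBinom ((d : ℝ) + α) (d - s) * genBinom ((d : ℝ) + β) s *
      ((x - 1) / 2) ^ s * ((x + 1) / 2) ^ (d - s)

/-- The largest root `t_{1,d}^{α,β}` of the Jacobi polynomial `p_d^{α,β}`. -/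
def maxRoot (α β : ℝ) (d : ℕ) : ℝ := sSup {x : ℝ | jacobiP α β d x = 0}

/-- `q_{d,α} = (α² - 1)/((d+α)(d+α+1))`. -/
def qda (d : ℕ) (α : ℝ) : ℝ := (α ^ 2 - 1) / (((d : ℝ) + α) * ((d : ℝ) + α + 1))

/-- coefficients -/
def jc (α : ℝ) (d s : ℕ) : ℝ := genBinom ((d : ℝ) + α) (d - s) * genBinom ((d : ℝ) + α) s

def jU : Polynomial ℝ := Polynomial.C (1/2) * (Polynomial.X - 1)
def jV : Polynomial ℝ := Polynomial.C (1/2) * (Polynomial.X + 1)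

def jpoly (α : ℝ) (d : ℕ) : Polynomial ℝ :=
  ∑ s ∈ Finset.range (d + 1), Polynomial.C (jc α d s) * (jU ^ s * jV ^ (d - s))

lemma jpoly_eval (α : ℝ) (d : ℕ) (x : ℝ) : (jpoly α d).eval x = jacobiP α α d x := by
  unfold jpoly jacobiP jc jU jV
  rw [Polynomial.eval_finsetSum]
  refine Finset.sum_congr rfl fun s _ => ?_
  simp only [Polynomial.eval_mul, Polynomial.eval_pow, Polynomial.eval_C, Polynomial.eval_sub,
    Polynomial.eval_add, Polynomial.eval_X, Polynomial.eval_one]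
  rw [show (1/2 : ℝ) * (x - 1) = (x-1)/2 by ring, show (1/2 : ℝ) * (x + 1) = (x+1)/2 by ring]
  ring

lemma genBinom_succ (a : ℝ) (k : ℕ) : genBinom a (k+1) * (k+1) = genBinom a k * (a - k) := by
  unfold genBinom
  rw [Finset.prod_range_succ, Nat.factorial_succ]
  have : (k.factorial : ℝ) ≠ 0 := by positivity
  push_cast
  field_simp

lemma genBinom_pos (a : ℝ) (k : ℕ) (h : (k : ℝ) < a + 1) : 0 < genBinom a k := by
  unfold genBinom
  apply div_pos _ (by positivity)
  refine Finset.prod_pos fun i hi => ?_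
  have : i + 1 ≤ k := Finset.mem_range.1 hi
  have : (i : ℝ) + 1 ≤ k := by exact_mod_cast this
  linarith

lemma jc_pos (α : ℝ) (hα : 0 < α) (d s : ℕ) (hs : s ≤ d) : 0 < jc α d s := by
  unfold jc
  have : (s : ℝ) ≤ d := by exact_mod_cast hs
  have : ((d - s : ℕ) : ℝ) ≤ d := by exact_mod_cast Nat.sub_le d s
  exact mul_pos (genBinom_pos _ _ (by linarith)) (genBinom_pos _ _ (by linarith))

lemma jc_rec (α : ℝ) (d s : ℕ) (hs : s < d) :
    jc α d (s+1) * ((s+1) * (s+1+α)) = jc α d s * ((d - s) * (d - s + α)) := by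
  obtain ⟨k, rfl⟩ := Nat.exists_eq_add_of_lt hs
  unfold jc
  rw [show s + k + 1 - (s+1) = k by omega, show s + k + 1 - s = k + 1 by omega]
  have h1 := genBinom_succ (((s + k + 1 : ℕ) : ℝ) + α) s
  have h2 := genBinom_succ (((s + k + 1 : ℕ) : ℝ) + α) k
  push_cast at *
  linear_combination (genBinom (s + k + 1 + α) k * (s+1+α)) * h1 - (genBinom (s + k + 1 + α) s * (k+1+α)) * h2

/-- the differential operator applied to a basis term -/
lemma op_term (α x : ℝ) (s k : ℕ) :
    (1 - x^2) * (Polynomial.derivative (Polynomial.derivative (jU ^ s * jV ^ k))).eval x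
    - (2*α+2) * x * (Polynomial.derivative (jU ^ s * jV ^ k)).eval x
    + (s+k) * (s+k+2*α+1) * (jU ^ s * jV ^ k).eval x
    = -(s * (s+α)) * (((x-1)/2)^(s-1) * ((x+1)/2)^k)
      + (k * (k+α)) * (((x-1)/2)^s * ((x+1)/2)^(k-1)) := by
  have hU : Polynomial.derivative jU = Polynomial.C (1/2) := by simp [jU]
  have hV : Polynomial.derivative jV = Polynomial.C (1/2) := by simp [jV]
  have eU : jU.eval x = (x-1)/2 := by simp [jU]; ring
  have eV : jV.eval x = (x+1)/2 := by simp [jV]; ring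
  rcases s with _ | _ | s <;> rcases k with _ | _ | k <;>
  simp [Polynomial.derivative_mul, Polynomial.derivative_pow, hU, hV, eU, eV] <;> ring

lemma jpoly_ode (α : ℝ) (d : ℕ) (x : ℝ) :
    (1 - x^2) * (Polynomial.derivative (Polynomial.derivative (jpoly α d))).eval x
    - (2*α+2) * x * (Polynomial.derivative (jpoly α d)).eval x
    + d * (d+2*α+1) * (jpoly α d).eval x = 0 := by
  unfold jpoly
  simp only [Polynomial.derivative_sum, Polynomial.derivative_C_mul, Polynomial.eval_finsetSum,
    Polynomial.eval_C_mul, Finset.mul_sum]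
  rw [← Finset.sum_sub_distrib, ← Finset.sum_add_distrib]
  let g : ℕ → ℝ := fun s => if s ≤ d then
    jc α d s * (s * (s+α)) * (((x-1)/2)^(s-1) * ((x+1)/2)^(d-s)) else 0
  have key : ∀ s ∈ Finset.range (d+1),
      (1 - x ^ 2) * (jc α d s *
        (Polynomial.derivative (Polynomial.derivative (jU ^ s * jV ^ (d - s)))).eval x) -
      (2 * α + 2) * x * (jc α d s * (Polynomial.derivative (jU ^ s * jV ^ (d - s))).eval x) +
      d * (d + 2 * α + 1) * (jc α d s * (jU ^ s * jV ^ (d - s)).eval x) = g (s+1) - g s := by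
    intro s hs
    have hs' : s ≤ d := Nat.lt_succ_iff.1 (Finset.mem_range.1 hs)
    have h := op_term α x s (d - s)
    have hc : ((d - s : ℕ) : ℝ) = d - s := by push_cast [hs']; ring
    rw [hc] at h
    have hg : g (s+1) = jc α d s * ((d - s) * (d - s + α)) * (((x-1)/2)^s * ((x+1)/2)^(d-s-1)) := by
      by_cases hsd : s < d
      · simp only [g, if_pos (show s + 1 ≤ d from hsd)]
        rw [← jc_rec α d s hsd]
        push_cast
        simp [Nat.sub_sub]
      · have : s = d := by omega
        subst this
        simp [g]
    rw [hg]
    simp only [g, if_pos hs']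
    refine Eq.trans ?_ ((congrArg (fun z => jc α d s * z) h).trans ?_)
    · rw [show (s : ℝ) + (d - s) = d by ring]; ring
    · ring
  rw [Finset.sum_congr rfl key, Finset.sum_range_sub]
  simp [g]

lemma jacobi_pos_of_one_le (α : ℝ) (hα : 0 < α) (d : ℕ) (x : ℝ) (hx : 1 ≤ x) :
    0 < jacobiP α α d x := by
  unfold jacobiP
  refine Finset.sum_pos' (fun s hs => ?_) ⟨0, by simp, ?_⟩
  · have hs' : s ≤ d := Nat.lt_succ_iff.1 (Finset.mem_range.1 hs)
    have h := jc_pos α hα d s hs'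
    unfold jc at h
    have : 0 ≤ (x - 1)/2 := by linarith
    have : 0 ≤ (x + 1)/2 := by linarith
    positivity
  · have h := jc_pos α hα d 0 (Nat.zero_le _)
    unfold jc at h
    have : 0 < (x + 1)/2 := by linarith
    simp only [pow_zero, mul_one]
    positivity

lemma jacobi_neg (α : ℝ) (d : ℕ) (x : ℝ) :
    jacobiP α α d (-x) = (-1)^d * jacobiP α α d x := by
  unfold jacobiP
  rw [← Finset.sum_range_reflect, Finset.mul_sum]
  refine Finset.sum_congr rfl fun s hs => ?_
  have hs' : s ≤ d := Nat.lt_succ_iff.1 (Finset.mem_range.1 hs)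
  obtain ⟨k, rfl⟩ := Nat.exists_eq_add_of_le hs'
  rw [show s + k + 1 - 1 - s = k by omega, show s + k - k = s by omega, show s + k - s = k by omega]
  rw [show (-x - 1)/2 = -1 * ((x+1)/2) by ring, show (-x + 1)/2 = -1 * ((x-1)/2) by ring,
    mul_pow, mul_pow, pow_add]
  ring

lemma bdd_roots (α : ℝ) (hα : 0 < α) (d : ℕ) : BddAbove {x : ℝ | jacobiP α α d x = 0} := by
  refine ⟨1, fun x hx => ?_⟩
  by_contra h
  exact (jacobi_pos_of_one_le α hα d x (not_le.1 h).le).ne' hx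

lemma maxRoot_nonneg (α : ℝ) (hα : 0 < α) (d : ℕ) : 0 ≤ maxRoot α α d := by
  unfold maxRoot
  rcases Set.eq_empty_or_nonempty {x : ℝ | jacobiP α α d x = 0} with h | ⟨r, hr⟩
  · rw [h, Real.sSup_empty]
  · have h1 := le_csSup (bdd_roots α hα d) hr
    have hr' : -r ∈ {x : ℝ | jacobiP α α d x = 0} := by
      have hr0 : jacobiP α α d r = 0 := hr
      simp [jacobi_neg, hr0]
    have h2 := le_csSup (bdd_roots α hα d) hr'
    linarith

lemma jacobi_pos (α : ℝ) (hα : 0 < α) (d : ℕ) (x : ℝ) (hx : maxRoot α α d < x) :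
    0 < jacobiP α α d x := by
  rcases le_total 1 x with h1 | h1
  · exact jacobi_pos_of_one_le α hα d x h1
  by_contra hn
  have hcont : ContinuousOn (jacobiP α α d) (Set.Icc x 1) := by
    have : jacobiP α α d = fun t => (jpoly α d).eval t := by
      ext t; rw [jpoly_eval]
    rw [this]; exact (jpoly α d).continuous.continuousOn
  obtain ⟨r, hr, hr0⟩ := intermediate_value_Icc h1 hcont
    ⟨not_lt.1 hn, (jacobi_pos_of_one_le α hα d 1 le_rfl).le⟩
  have := le_csSup (bdd_roots α hα d) (show r ∈ {x : ℝ | jacobiP α α d x = 0} from hr0)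
  have h3 := hr.1
  unfold maxRoot at hx
  linarith

lemma main_aux (α : ℝ) (hα : 1 ≤ α) (d : ℕ) :
    ConcaveOn ℝ (Set.Icc (maxRoot α α d) (Real.sqrt (1 - qda d α)))
      (fun t => (1 - t ^ 2) ^ ((α + 1) / 2) * jacobiP α α d t) := by
  have hα0 : 0 < α := by linarith
  have hd0 : (0 : ℝ) ≤ d := Nat.cast_nonneg d
  have hK : 0 < ((d : ℝ) + α) * ((d : ℝ) + α + 1) := by positivity
  have hq : 0 ≤ qda d α := div_nonneg (by nlinarith) hK.le
  have hqK : qda d α * (((d : ℝ) + α) * ((d : ℝ) + α + 1)) = α^2 - 1 := by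
    unfold qda; field_simp
  have hm := maxRoot_nonneg α hα0 d
  simp only [← jpoly_eval]
  set p := jpoly α d with hp
  set γ := (α + 1)/2 with hγ
  have hγ1 : 0 < γ := by positivity
  have hw : ∀ t ∈ Set.Ioo (maxRoot α α d) (Real.sqrt (1 - qda d α)),
      0 < 1 - t^2 ∧ t^2 < 1 - qda d α ∧ 0 < p.eval t := by
    intro t ht
    have h0 : 0 < t := lt_of_le_of_lt hm ht.1
    have h1 := (Real.lt_sqrt h0.le).1 ht.2
    refine ⟨by linarith, h1, ?_⟩
    rw [hp, jpoly_eval]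
    exact jacobi_pos α hα0 d t ht.1
  have hw' : ∀ t : ℝ, HasDerivAt (fun t : ℝ => 1 - t^2) (-(2*t)) t := by
    intro t
    simpa using ((hasDerivAt_id t).pow 2).const_sub 1
  have hpow : ∀ (c t : ℝ), 0 < 1 - t^2 →
      HasDerivAt (fun t : ℝ => (1 - t^2) ^ c) (-(2*t) * c * (1 - t^2)^(c-1)) t := by
    intro c t ht
    exact (hw' t).rpow_const (Or.inl ht.ne')
  refine concaveOn_of_hasDerivWithinAt2_nonpos (convex_Icc _ _)
    (f' := fun t => (-(2*t) * γ * (1 - t^2)^(γ-1)) * p.eval t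
      + (1-t^2)^γ * (Polynomial.derivative p).eval t)
    (f'' := fun t => ((-2 * γ * (1 - t^2)^(γ-1) + (-(2*t) * γ) * (-(2*t) * (γ-1) * (1 - t^2)^(γ-1-1)))
        * p.eval t + (-(2*t) * γ * (1 - t^2)^(γ-1)) * (Polynomial.derivative p).eval t)
      + ((-(2*t) * γ * (1 - t^2)^(γ-1)) * (Polynomial.derivative p).eval t
      + (1-t^2)^γ * (Polynomial.derivative (Polynomial.derivative p)).eval t)) ?_ ?_ ?_ ?_
  · apply ContinuousOn.mul _ p.continuous.continuousOn
    apply Continuous.continuousOn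
    exact Continuous.rpow_const (by fun_prop) (fun _ => Or.inr hγ1.le)
  · rw [interior_Icc]
    intro t ht
    exact ((hpow γ t (hw t ht).1).mul (p.hasDerivAt t)).hasDerivWithinAt
  · rw [interior_Icc]
    intro t ht
    have hl : HasDerivAt (fun t : ℝ => -(2*t) * γ) (-2 * γ) t := by
      have := (((hasDerivAt_id t).const_mul 2).neg).mul_const γ
      simpa using this
    exact (((hl.mul (hpow (γ-1) t (hw t ht).1)).mul (p.hasDerivAt t)).add
      ((hpow γ t (hw t ht).1).mul ((Polynomial.derivative p).hasDerivAt t))).hasDerivWithinAt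
  · rw [interior_Icc]
    intro t ht
    obtain ⟨h1, h2, h3⟩ := hw t ht
    have ode := jpoly_ode α d t
    rw [← hp] at ode
    have e1 : (1-t^2)^(γ-1) = (1-t^2)^(γ-1-1) * (1-t^2) := by
      rw [Real.rpow_sub_one h1.ne' (γ-1)]; field_simp
    have e2 : (1-t^2)^γ = (1-t^2)^(γ-1-1) * (1-t^2)^2 := by
      rw [Real.rpow_sub_one h1.ne' (γ-1), Real.rpow_sub_one h1.ne' γ]; field_simp
    have hW : 0 < (1-t^2)^(γ-1-1) := Real.rpow_pos_of_pos h1 _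
    rw [e2, e1]
    generalize (1-t^2)^(γ-1-1) = W at hW
    have hpos : 0 ≤ W * ((((d : ℝ) + α) * ((d : ℝ) + α + 1)) * (1 - qda d α - t^2)) * p.eval t := by
      have : 0 ≤ 1 - qda d α - t^2 := by linarith
      positivity
    have hα2 : α = 2*γ - 1 := by rw [hγ]; ring
    refine le_of_eq_of_le ?_ (neg_nonpos.2 hpos)
    rw [hα2] at ode hqK ⊢
    linear_combination (W * (1-t^2)) * ode - W * p.eval t * hqK

/-- With `α = (n-3)/2`, the function `(1-t²)^{(α+1)/2}·p_d^{α,α}(t)` is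
concave on `[t_{1,d}^{α,α}, sqrt(1 - q_{d,α})]`. -/
theorem jacobi_normal_form_concave (n : ℕ) (hn : 5 ≤ n) (d : ℕ) (hd : 1 ≤ d) :
    ConcaveOn ℝ
      (Set.Icc (maxRoot (((n : ℝ) - 3) / 2) (((n : ℝ) - 3) / 2) d)
        (Real.sqrt (1 - qda d (((n : ℝ) - 3) / 2))))
      (fun t => (1 - t ^ 2) ^ ((((n : ℝ) - 3) / 2 + 1) / 2) *
        jacobiP (((n : ℝ) - 3) / 2) (((n : ℝ) - 3) / 2) d t) := by
  have h5 : (5 : ℝ) ≤ n := by exact_mod_cast hn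
  exact main_aux (((n : ℝ) - 3) / 2) (by linarith) d
end
end

section
/- Let n ≥ 3, α := (n−3)/2, and let d ≥ 1 be an integer; set q_{d,α} := (α²−1)/((d+α)(d+α+1)). Then the function t ↦ (1−t²)^{α}·(p_d^{α,α}(t))² is nonincreasing on the interval [sqrt(1−q_{d,α}), 1]: for all t₁ ≤ t₂ in this interval (intersected with [−1,1]), (1−t₂²)^{α}·(p_d^{α,α}(t₂))² ≤ (1−t₁²)^{α}·(p_d^{α,α}(t₁))². -/
open MeasureTheory Filter Real

noncomputable section

lemma genBinom_succ_mul (a : ℝ) (k : ℕ) :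
    genBinom a (k + 1) * (k + 1) = genBinom a k * (a - k) := by
  unfold genBinom
  rw [Finset.prod_range_succ, Nat.factorial_succ]
  have h1 : (Nat.factorial k : ℝ) ≠ 0 := by positivity
  have h2 : ((k : ℝ) + 1) ≠ 0 := by positivity
  push_cast
  field_simp

lemma jc_rec_s18 (α : ℝ) (k j : ℕ) :
    jc α (k + (j + 1)) (k + 1) * (k + 1) * (k + 1 + α) =
      jc α (k + (j + 1)) k * (j + 1) * (j + 1 + α) := by
  unfold jc
  have e1 : k + (j + 1) - (k + 1) = j := by omega
  have e2 : k + (j + 1) - k = j + 1 := by omega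
  rw [e1, e2]
  have h1 := genBinom_succ_mul (((k + (j + 1) : ℕ) : ℝ) + α) k
  have h2 := genBinom_succ_mul (((k + (j + 1) : ℕ) : ℝ) + α) j
  set g := genBinom (((k + (j + 1) : ℕ) : ℝ) + α)
  push_cast at h1 h2
  linear_combination (g j * (k + 1 + α)) * h1 - (g k * (j + 1 + α)) * h2

/-- first derivative of the Jacobi polynomial -/
def jP1 (α : ℝ) (d : ℕ) (x : ℝ) : ℝ :=
  ∑ s ∈ Finset.range (d + 1), jc α d s *
    ((s : ℝ) * ((x - 1) / 2) ^ (s - 1) / 2 * ((x + 1) / 2) ^ (d - s) +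
      ((x - 1) / 2) ^ s * (((d - s : ℕ) : ℝ) * ((x + 1) / 2) ^ (d - s - 1) / 2))

/-- second derivative of the Jacobi polynomial -/
def jP2 (α : ℝ) (d : ℕ) (x : ℝ) : ℝ :=
  ∑ s ∈ Finset.range (d + 1), jc α d s *
    ((s : ℝ) * (((s - 1 : ℕ) : ℝ) * ((x - 1) / 2) ^ (s - 1 - 1) / 2) / 2
        * ((x + 1) / 2) ^ (d - s) +
      (s : ℝ) * ((x - 1) / 2) ^ (s - 1) / 2 *
        (((d - s : ℕ) : ℝ) * ((x + 1) / 2) ^ (d - s - 1) / 2) +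
      ((s : ℝ) * ((x - 1) / 2) ^ (s - 1) / 2 *
        (((d - s : ℕ) : ℝ) * ((x + 1) / 2) ^ (d - s - 1) / 2) +
      ((x - 1) / 2) ^ s * (((d - s : ℕ) : ℝ) * (((d - s - 1 : ℕ) : ℝ) *
        ((x + 1) / 2) ^ (d - s - 1 - 1) / 2) / 2)))

lemma hasDerivAt_pow_sub (k : ℕ) (x : ℝ) :
    HasDerivAt (fun x : ℝ => ((x - 1) / 2) ^ k) ((k : ℝ) * ((x - 1) / 2) ^ (k - 1) / 2) x := by
  have h := (((hasDerivAt_id x).sub_const 1).div_const 2).pow k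
  refine h.congr_deriv ?_
  simp only [id]
  ring

lemma hasDerivAt_pow_add (k : ℕ) (x : ℝ) :
    HasDerivAt (fun x : ℝ => ((x + 1) / 2) ^ k) ((k : ℝ) * ((x + 1) / 2) ^ (k - 1) / 2) x := by
  have h := (((hasDerivAt_id x).add_const 1).div_const 2).pow k
  refine h.congr_deriv ?_
  simp only [id]
  ring

lemma hasDerivAt_jacobiP (α : ℝ) (d : ℕ) (x : ℝ) :
    HasDerivAt (jacobiP α α d) (jP1 α d x) x := by
  have : jacobiP α α d = fun x => ∑ s ∈ Finset.range (d + 1), jc α d s *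
      (((x - 1) / 2) ^ s * ((x + 1) / 2) ^ (d - s)) := by
    funext x
    unfold jacobiP jc
    exact Finset.sum_congr rfl fun s _ => by ring
  rw [this]
  unfold jP1
  refine HasDerivAt.fun_sum fun s _ => ?_
  exact ((hasDerivAt_pow_sub s x).mul (hasDerivAt_pow_add (d - s) x)).const_mul _

lemma hasDerivAt_jP1 (α : ℝ) (d : ℕ) (x : ℝ) :
    HasDerivAt (jP1 α d) (jP2 α d x) x := by
  unfold jP1 jP2
  refine HasDerivAt.fun_sum fun s _ => ?_
  refine HasDerivAt.const_mul _ (HasDerivAt.add ?_ ?_)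
  · exact ((((hasDerivAt_pow_sub (s - 1) x).const_mul (s : ℝ)).div_const 2).mul
      (hasDerivAt_pow_add (d - s) x))
  · exact ((hasDerivAt_pow_sub s x).mul
      (((hasDerivAt_pow_add (d - s - 1) x).const_mul ((d - s : ℕ) : ℝ)).div_const 2))

/-- the summand of the differential operator, in closed form -/
lemma term_eq (α a b : ℝ) (s m : ℕ) :
    (-4 * a * b) * ((s : ℝ) * (((s - 1 : ℕ) : ℝ) * a ^ (s - 1 - 1) / 2) / 2 * b ^ m +
      (s : ℝ) * a ^ (s - 1) / 2 * ((m : ℝ) * b ^ (m - 1) / 2) +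
      ((s : ℝ) * a ^ (s - 1) / 2 * ((m : ℝ) * b ^ (m - 1) / 2) +
      a ^ s * ((m : ℝ) * (((m - 1 : ℕ) : ℝ) * b ^ (m - 1 - 1) / 2) / 2)))
    - 2 * (α + 1) * (a + b) * ((s : ℝ) * a ^ (s - 1) / 2 * b ^ m +
      a ^ s * ((m : ℝ) * b ^ (m - 1) / 2))
    + ((s : ℝ) + m) * (s + m + 2 * α + 1) * (a ^ s * b ^ m) =
    s * (s + α) * (a ^ s * b ^ m - a ^ (s - 1) * b ^ (m + 1)) +
      m * (m + α) * (a ^ s * b ^ m - a ^ (s + 1) * b ^ (m - 1)) := by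
  rcases s with _ | _ | s <;> rcases m with _ | _ | m <;> simp <;> ring

lemma telescope (α a b : ℝ) (d : ℕ) (k j : ℕ) (h : d = k + j) :
    ∑ s ∈ Finset.range (k + 1), jc α d s *
      (s * (s + α) * (a ^ s * b ^ (d - s) - a ^ (s - 1) * b ^ (d - s + 1)) +
      ((d - s : ℕ) : ℝ) * ((d - s : ℕ) + α) *
        (a ^ s * b ^ (d - s) - a ^ (s + 1) * b ^ (d - s - 1))) =
    jc α d k * (j * (j + α) * (a ^ k * b ^ j - a ^ (k + 1) * b ^ (j - 1))) := by
  induction k generalizing j with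
  | zero => subst h; simp
  | succ k ih =>
    rw [Finset.sum_range_succ, ih (j + 1) (by omega)]
    have e : d - (k + 1) = j := by omega
    rw [e]
    have hr := jc_rec_s18 α k j
    rw [show k + (j + 1) = d by omega] at hr
    simp only [Nat.add_sub_cancel]
    push_cast
    linear_combination (a ^ (k + 1) * b ^ j - a ^ k * b ^ (j + 1)) * hr

lemma jacobi_ode (α : ℝ) (d : ℕ) (x : ℝ) :
    (1 - x ^ 2) * jP2 α d x - 2 * (α + 1) * x * jP1 α d x
      + d * (d + 2 * α + 1) * jacobiP α α d x = 0 := by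
  have h := telescope α ((x - 1) / 2) ((x + 1) / 2) d d 0 rfl
  simp only [Nat.cast_zero, zero_mul, mul_zero] at h
  rw [← h]
  have : jacobiP α α d x = ∑ s ∈ Finset.range (d + 1), jc α d s *
      (((x - 1) / 2) ^ s * ((x + 1) / 2) ^ (d - s)) := by
    unfold jacobiP jc
    exact Finset.sum_congr rfl fun s _ => by ring
  rw [this]
  unfold jP1 jP2
  rw [Finset.mul_sum, Finset.mul_sum, Finset.mul_sum, ← Finset.sum_sub_distrib,
    ← Finset.sum_add_distrib]
  refine Finset.sum_congr rfl fun s hs => ?_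
  rw [← term_eq]
  have hd : (d : ℝ) = s + ((d - s : ℕ) : ℝ) := by
    have : s ≤ d := by simpa [Nat.lt_succ_iff] using hs
    push_cast [this]; ring
  generalize d - s = m at *
  rw [hd]
  ring

lemma main_antitone (α : ℝ) (d : ℕ) (hα : 1 < α) (r : ℝ) (hr0 : 0 ≤ r)
    (hr : ∀ t, r ≤ t → ((d : ℝ) + α) * (d + α + 1) * (1 - t ^ 2) ≤ α ^ 2) :
    AntitoneOn (fun t : ℝ => (1 - t ^ 2) ^ α * jacobiP α α d t ^ 2) (Set.Icc r 1) := by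
  have hpc : Continuous (jacobiP α α d) :=
    continuous_iff_continuousAt.2 fun x => (hasDerivAt_jacobiP α d x).continuousAt
  have hp1c : Continuous (jP1 α d) :=
    continuous_iff_continuousAt.2 fun x => (hasDerivAt_jP1 α d x).continuousAt
  have hwc : Continuous (fun t : ℝ => (1 - t ^ 2) ^ α) :=
    (continuous_const.sub (continuous_pow 2)).rpow_const fun _ => Or.inr (by linarith)
  have hw : ∀ t : ℝ, 0 < 1 - t ^ 2 → HasDerivAt (fun t : ℝ => (1 - t ^ 2) ^ α)
      (-(2 * t) * α * (1 - t ^ 2) ^ (α - 1)) t := by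
    intro t ht
    have h1 : HasDerivAt (fun t : ℝ => 1 - t ^ 2) (-(2 * t)) t := by
      simpa using (hasDerivAt_pow 2 t).const_sub 1
    exact h1.rpow_const (Or.inl ht.ne')
  have hpos : ∀ t ∈ Set.Ioo r 1, 0 < 1 - t ^ 2 := by
    rintro t ⟨h1, h2⟩; nlinarith
  have hsplit : ∀ t : ℝ, 0 < 1 - t ^ 2 →
      (1 - t ^ 2) ^ α = (1 - t ^ 2) ^ (α - 1) * (1 - t ^ 2) := by
    intro t ht
    rw [← Real.rpow_add_one ht.ne']; congr 1; ring
  set G : ℝ → ℝ := fun t => (1 - t ^ 2) ^ α *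
    (jacobiP α α d t * (-α * t * jacobiP α α d t + (1 - t ^ 2) * jP1 α d t)) with hG
  have hGc : Continuous G := by
    apply hwc.mul
    fun_prop
  have hGm : MonotoneOn G (Set.Icc r 1) := by
    have hGd : ∀ t ∈ Set.Ioo r 1, HasDerivAt G ((1 - t ^ 2) ^ (α - 1) *
        ((-α * t * jacobiP α α d t + (1 - t ^ 2) * jP1 α d t) ^ 2 +
        (α ^ 2 - (d + α) * (d + α + 1) * (1 - t ^ 2)) * jacobiP α α d t ^ 2)) t := by
      intro t ht
      have hp := hasDerivAt_jacobiP α d t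
      have hp1 := hasDerivAt_jP1 α d t
      have h1 : HasDerivAt (fun t : ℝ => 1 - t ^ 2) (-(2 * t)) t := by
        simpa using (hasDerivAt_pow 2 t).const_sub 1
      have h2 : HasDerivAt (fun t : ℝ => -α * t) (-α) t := by
        simpa using (hasDerivAt_id t).const_mul (-α)
      refine ((hw t (hpos t ht)).mul (hp.mul ((h2.mul hp).add (h1.mul hp1)))).congr_deriv ?_
      have ho := jacobi_ode α d t
      simp only [Pi.mul_apply, Pi.add_apply]
      rw [hsplit t (hpos t ht)]
      linear_combination ((1 - t ^ 2) ^ (α - 1) * (1 - t ^ 2) * jacobiP α α d t) * ho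
    apply monotoneOn_of_deriv_nonneg (convex_Icc r 1) hGc.continuousOn
    · rw [interior_Icc]
      exact fun t ht => (hGd t ht).differentiableAt.differentiableWithinAt
    · rw [interior_Icc]
      intro t ht
      rw [(hGd t ht).deriv]
      have h3 := hr t ht.1.le
      have h4 := Real.rpow_nonneg (hpos t ht).le (α - 1)
      have h5 : 0 ≤ α ^ 2 - (d + α) * (d + α + 1) * (1 - t ^ 2) := by linarith
      positivity
  have hG1 : G 1 = 0 := by
    simp only [hG]
    rw [show (1 : ℝ) - 1 ^ 2 = 0 by norm_num, Real.zero_rpow (by linarith)]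
    ring
  have hFd : ∀ t ∈ Set.Ioo r 1, HasDerivAt
      (fun t : ℝ => (1 - t ^ 2) ^ α * jacobiP α α d t ^ 2) (2 * G t / (1 - t ^ 2)) t := by
    intro t ht
    have hp := hasDerivAt_jacobiP α d t
    refine ((hw t (hpos t ht)).mul (hp.pow 2)).congr_deriv ?_
    have := (hpos t ht).ne'
    rw [eq_div_iff this]
    simp only [hG, Pi.pow_apply]
    rw [hsplit t (hpos t ht)]
    push_cast
    ring
  apply antitoneOn_of_deriv_nonpos (convex_Icc r 1)
  · exact (hwc.mul (hpc.pow 2)).continuousOn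
  · rw [interior_Icc]
    exact fun t ht => (hFd t ht).differentiableAt.differentiableWithinAt
  · rw [interior_Icc]
    intro t ht
    rw [(hFd t ht).deriv]
    have h1 : G t ≤ G 1 :=
      hGm ⟨ht.1.le, ht.2.le⟩ ⟨(ht.1.trans ht.2).le, le_refl _⟩ ht.2.le
    exact div_nonpos_of_nonpos_of_nonneg (by linarith) (hpos t ht).le

/-- With `α = (n-3)/2`, the function `(1-t²)^α·(p_d^{α,α}(t))²` is
nonincreasing on `[sqrt(1 - q_{d,α}), 1]`. -/
theorem jacobi_weighted_square_antitone (n : ℕ) (hn : 3 ≤ n) (d : ℕ) (hd : 1 ≤ d) :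
    AntitoneOn
      (fun t => (1 - t ^ 2) ^ (((n : ℝ) - 3) / 2) *
        jacobiP (((n : ℝ) - 3) / 2) (((n : ℝ) - 3) / 2) d t ^ 2)
      (Set.Icc (Real.sqrt (1 - qda d (((n : ℝ) - 3) / 2))) 1) := by
  have hn' : (3 : ℝ) ≤ n := by exact_mod_cast hn
  have hd' : (1 : ℝ) ≤ d := by exact_mod_cast hd
  have hα0 : 0 ≤ ((n : ℝ) - 3) / 2 := by linarith
  generalize ((n : ℝ) - 3) / 2 = α at *
  have hD : 0 < ((d : ℝ) + α) * (d + α + 1) := by positivity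
  rcases le_or_gt α 1 with h | h
  · have hq : qda d α ≤ 0 := by
      unfold qda
      exact div_nonpos_of_nonpos_of_nonneg (by nlinarith) hD.le
    have h1 : ∀ t ∈ Set.Icc (Real.sqrt (1 - qda d α)) 1, t = 1 := by
      rintro t ⟨h1, h2⟩
      obtain ⟨h3, h4⟩ := Real.sqrt_le_iff.1 h1
      nlinarith
    intro x hx y hy _
    rw [h1 x hx, h1 y hy]
  · refine main_antitone α d h _ (Real.sqrt_nonneg _) fun t ht => ?_
    obtain ⟨_, h4⟩ := Real.sqrt_le_iff.1 ht
    have h5 : 1 - t ^ 2 ≤ qda d α := by linarith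
    unfold qda at h5
    rw [le_div_iff₀ hD] at h5
    linarith
end
end
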